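/- Let (L, [·,·], α, β) be a BiHom-Lie superalgebra over a field k with α and β bijective. Then L is BiHom-Lie admissible as a BiHom-superalgebra with multiplication μ = [·,·]; that is, the bracket [x, y]' = [x, y] − (−1)^{|x||y|}[α⁻¹(β(y)), α(β⁻¹(x))] satisfies the BiHom-superJacobi identity (−1)^{|x||z|}[β²(x), [β(y), α(z)]']' + (−1)^{|y||x|}[β²(y), [β(z), α(x)]']' + (−1)^{|z||y|}[β²(z), [β(x), α(y)]']' = 0 for all homogeneous x, y, z ∈ L. (Proposition 3.3) -/

import Mathlib

/-- The supercommutator of a bracket `b` of a BiHom-superalgebra with bijective structure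
maps `α`, `β`, defined on elements of parities `i`, `j` by
`[x, y]' = b x y − (−1)^{|x||y|} b (α⁻¹(β(y))) (α(β⁻¹(x)))`. -/
noncomputable def superComm {K : Type*} [Field K] {A : Type*} [AddCommGroup A] [Module K A]
    (b : A →ₗ[K] A →ₗ[K] A) (α β : A ≃ₗ[K] A) (i j : ZMod 2) (x y : A) : A :=
  b x y - ((-1 : K) ^ (i.val * j.val)) • b (α.symm (β y)) (α (β.symm x))

theorem even_symm_aux {K : Type*} [Field K] {L : Type*} [AddCommGroup L] [Module K L]
    (𝒜 : ZMod 2 → Submodule K L) [DirectSum.Decomposition 𝒜] (f : L ≃ₗ[K] L)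
    (hf : ∀ (i : ZMod 2), ∀ x ∈ 𝒜 i, f x ∈ 𝒜 i) (i : ZMod 2) (x : L) (hx : x ∈ 𝒜 i) :
    f.symm x ∈ 𝒜 i := by
  have key : ∀ y : L, (DirectSum.decompose 𝒜 (f y) i : L) = f (DirectSum.decompose 𝒜 y i) := by
    intro y
    induction y using DirectSum.Decomposition.inductionOn 𝒜 with
    | zero => simp
    | @homogeneous j m =>
      by_cases h : j = i
      · subst h
        rw [DirectSum.decompose_of_mem_same 𝒜 (hf _ _ m.2),
          DirectSum.decompose_of_mem_same 𝒜 m.2]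
      · rw [DirectSum.decompose_of_mem_ne 𝒜 (hf _ _ m.2) h,
          DirectSum.decompose_of_mem_ne 𝒜 m.2 h, map_zero]
    | add m n hm hn =>
      simp only [map_add, DirectSum.decompose_add, DirectSum.add_apply, Submodule.coe_add, hm, hn]
  have h := key (f.symm x)
  rw [f.apply_symm_apply, DirectSum.decompose_of_mem_same 𝒜 hx] at h
  rw [h, f.symm_apply_apply]
  exact (DirectSum.decompose 𝒜 (f.symm x) i).2

/-- **Proposition 3.3.** Every BiHom-Lie superalgebra `(L, [·,·], α, β)` with bijective
`α`, `β` is BiHom-Lie admissible: the bracket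
`[x, y]' = [x, y] − (−1)^{|x||y|}[α⁻¹(β(y)), α(β⁻¹(x))]` satisfies the
BiHom-superJacobi identity on homogeneous elements. -/
theorem bihomLie_is_bihomLie_admissible
    (K : Type*) [Field K] (L : Type*) [AddCommGroup L] [Module K L]
    (𝒜 : ZMod 2 → Submodule K L) [DirectSum.Decomposition 𝒜]
    (b : L →ₗ[K] L →ₗ[K] L) (α β : L ≃ₗ[K] L)
    (hb : ∀ (i j : ZMod 2), ∀ x ∈ 𝒜 i, ∀ y ∈ 𝒜 j, b x y ∈ 𝒜 (i + j))
    (hαe : ∀ (i : ZMod 2), ∀ x ∈ 𝒜 i, α x ∈ 𝒜 i)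
    (hβe : ∀ (i : ZMod 2), ∀ x ∈ 𝒜 i, β x ∈ 𝒜 i)
    (hco : ∀ a : L, α (β a) = β (α a))
    (hαh : ∀ x y : L, α (b x y) = b (α x) (α y))
    (hβh : ∀ x y : L, β (b x y) = b (β x) (β y))
    (hskew : ∀ (i j : ZMod 2), ∀ x ∈ 𝒜 i, ∀ y ∈ 𝒜 j,
      b (β x) (α y) = -(((-1 : K) ^ (i.val * j.val)) • b (β y) (α x)))
    (hjac : ∀ (i j l : ZMod 2), ∀ x ∈ 𝒜 i, ∀ y ∈ 𝒜 j, ∀ z ∈ 𝒜 l,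
      ((-1 : K) ^ (i.val * l.val)) • b (β (β x)) (b (β y) (α z))
        + ((-1 : K) ^ (j.val * i.val)) • b (β (β y)) (b (β z) (α x))
        + ((-1 : K) ^ (l.val * j.val)) • b (β (β z)) (b (β x) (α y)) = 0) :
    ∀ (i j l : ZMod 2), ∀ x ∈ 𝒜 i, ∀ y ∈ 𝒜 j, ∀ z ∈ 𝒜 l,
      ((-1 : K) ^ (i.val * l.val)) •
          superComm b α β i (j + l) (β (β x)) (superComm b α β j l (β y) (α z))
        + ((-1 : K) ^ (j.val * i.val)) •
          superComm b α β j (l + i) (β (β y)) (superComm b α β l i (β z) (α x))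
        + ((-1 : K) ^ (l.val * j.val)) •
          superComm b α β l (i + j) (β (β z)) (superComm b α β i j (β x) (α y)) = 0 := by
  have hS : ∀ (i j : ZMod 2), ∀ x ∈ 𝒜 i, ∀ y ∈ 𝒜 j,
      superComm b α β i j x y = (2 : K) • b x y := by
    intro i j x hx y hy
    have h := hskew i j _ (even_symm_aux 𝒜 β hβe i x hx) _ (even_symm_aux 𝒜 α hαe j y hy)
    have hc : α.symm (β y) = β (α.symm y) := by
      rw [LinearEquiv.symm_apply_eq, hco, LinearEquiv.apply_symm_apply]
    rw [LinearEquiv.apply_symm_apply, LinearEquiv.apply_symm_apply] at h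
    rw [superComm, hc, sub_eq_add_neg, ← h, two_smul]
  have hD : ∀ (i j l : ZMod 2), ∀ x ∈ 𝒜 i, ∀ y ∈ 𝒜 j, ∀ z ∈ 𝒜 l,
      superComm b α β i (j + l) (β (β x)) (superComm b α β j l (β y) (α z))
        = (4 : K) • b (β (β x)) (b (β y) (α z)) := by
    intro i j l x hx y hy z hz
    have hy' := hβe _ _ hy
    have hz' := hαe _ _ hz
    rw [hS j l _ hy' _ hz', hS i (j + l) _ (hβe _ _ (hβe _ _ hx)) _
      (Submodule.smul_mem _ _ (hb _ _ _ hy' _ hz')), map_smul, smul_smul]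
    norm_num
  intro i j l x hx y hy z hz
  rw [hD i j l x hx y hy z hz, hD j l i y hy z hz x hx, hD l i j z hz x hx y hy,
    smul_comm _ (4 : K), smul_comm _ (4 : K), smul_comm _ (4 : K), ← smul_add, ← smul_add,
    hjac i j l x hx y hy z hz, smul_zero]
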